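/- Let d ≥ 1, let I be a metric space, let S : I → Matrix d d ℂ be continuous with sup_{i∈I} ‖S_i‖ < ∞ and with generalized spectral radius ρ(S) = 1, and let Λ ⊆ Σ_I^+ be a nonempty compact θ_+-invariant subset. Then the following are equivalent: (a) S is Λ-absolutely asymptotically stable, i.e. S_{i_n}···S_{i_1} → 0 as n → ∞ for every i(·) ∈ Λ; (b) ρ(S|Λ) < 1; (c) there exist a constant γ ∈ (0,1) and an integer N ≥ 1 such that ρ(S_{i_n}···S_{i_1}) ≤ γ for all n ≥ N and all i(·) ∈ Λ. -/

import Mathlib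

open Filter Topology MeasureTheory

/-- Operator norm on `d × d` complex matrices induced by the Euclidean norm on `ℂ^d`. -/
noncomputable def opNorm {d : ℕ} (A : Matrix (Fin d) (Fin d) ℂ) : ℝ :=
  ‖Matrix.toEuclideanCLM (𝕜 := ℂ) A‖

/-- Spectral radius of a complex matrix, as a real number. -/
noncomputable def specRad {d : ℕ} (A : Matrix (Fin d) (Fin d) ℂ) : ℝ :=
  (spectralRadius ℂ A).toReal

/-- `prodS S x n = S_{i_n} ⋯ S_{i_1}` where `i_k = x (k-1)`. -/
noncomputable def prodS {d : ℕ} {I : Type*} (S : I → Matrix (Fin d) (Fin d) ℂ)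
    (x : ℕ → I) : ℕ → Matrix (Fin d) (Fin d) ℂ
  | 0 => 1
  | n + 1 => S (x n) * prodS S x n

/-- `Λ` is invariant under the one-sided shift `θ₊`. -/
def ShiftInv {I : Type*} (Λ : Set (ℕ → I)) : Prop :=
  ∀ x ∈ Λ, (fun n => x (n + 1)) ∈ Λ

/-- Generalized spectral radius of `S` restricted to `Λ`. -/
noncomputable def gsr {d : ℕ} {I : Type*} (S : I → Matrix (Fin d) (Fin d) ℂ)
    (Λ : Set (ℕ → I)) : ℝ :=
  Filter.limsup (fun n : ℕ => ⨆ x : Λ, specRad (prodS S x.1 n) ^ (1 / (n : ℝ))) Filter.atTop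

section StabAux
open scoped Matrix.Norms.L2Operator

theorem burnside_adjoin {V : Type*} [AddCommGroup V] [Module ℂ V] [FiniteDimensional ℂ V] [Nontrivial V]
    (A : Subalgebra ℂ (Module.End ℂ V))
    (hirr : ∀ p : Submodule ℂ V, (∀ a ∈ A, ∀ v ∈ p, a v ∈ p) → p = ⊥ ∨ p = ⊤) : A = ⊤ := by
  have hsimp : IsSimpleModule A V := by
    have : IsSimpleOrder (Submodule A V) := by
      refine { eq_bot_or_eq_top := ?_ }
      intro p
      rcases hirr (p.restrictScalars ℂ) (fun a ha v hv => p.smul_mem (⟨a, ha⟩ : A) hv) with h | h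
      · left
        exact (Submodule.restrictScalars_eq_bot_iff ..).1 h
      · right
        exact (Submodule.restrictScalars_eq_top_iff ..).1 h
    exact (isSimpleModule_iff ..).2 this
  classical
  rw [eq_top_iff]
  intro f _
  have hb := (IsSimpleModule.algebraMap_end_bijective_of_isAlgClosed (A := A) (V := V) ℂ).2
  let F : Module.End (Module.End A V) V :=
    { toFun := f
      map_add' := f.map_add
      map_smul' := by
        intro g v
        obtain ⟨c, rfl⟩ := hb g
        simp }
  let b := Module.finBasis ℂ V
  obtain ⟨r, hr⟩ := jacobson_density (R := A) F (Finset.univ.image b)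
  have : f = r.1 := by
    apply b.ext
    intro i
    exact hr (b i) (Finset.mem_image_of_mem _ (Finset.mem_univ i))
  rw [this]; exact r.2

theorem bounded_of_irr {n : Type*} [Fintype n] [DecidableEq n] [Nonempty n]
    (s : Set (Matrix n n ℂ))
    (hirr : ∀ p : Submodule ℂ (n → ℂ), (∀ a ∈ s, ∀ v ∈ p, Matrix.mulVec a v ∈ p) → p = ⊥ ∨ p = ⊤)
    (htr : ∀ M ∈ Submonoid.closure s, ‖M.trace‖ ≤ Fintype.card n) :
    ∃ K : ℝ, ∀ M ∈ Submonoid.closure s, ‖M‖ ≤ K := by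
  have h1 : Algebra.adjoin ℂ s = ⊤ := by
    have h := burnside_adjoin ((Algebra.adjoin ℂ s).map (Matrix.toLinAlgEquiv' (R := ℂ) (n := n)).toAlgHom) ?_
    · rw [eq_top_iff]
      intro a _
      have ha : (Matrix.toLinAlgEquiv' (R := ℂ) (n := n)) a ∈ (⊤ : Subalgebra ℂ _) := trivial
      rw [← h] at ha
      obtain ⟨a', ha', he⟩ := ha
      have : a' = a := (Matrix.toLinAlgEquiv' (R := ℂ) (n := n)).injective he
      rw [← this]; exact ha'
    · intro p hp
      apply hirr p
      intro a ha v hv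
      exact hp _ ⟨a, Algebra.subset_adjoin ha, rfl⟩ v hv
  have h2 : Submodule.span ℂ (Submonoid.closure s : Set (Matrix n n ℂ)) = ⊤ := by
    rw [← Algebra.adjoin_eq_span, h1]; rfl
  have h3 : ∀ W : Matrix n n ℂ, ∃ c : ℝ, ∀ M ∈ Submonoid.closure s, ‖(W * M).trace‖ ≤ c := by
    intro W
    have hW : W ∈ Submodule.span ℂ (Submonoid.closure s : Set (Matrix n n ℂ)) := by rw [h2]; trivial
    induction hW using Submodule.span_induction with
    | mem W hW => exact ⟨_, fun M hM => htr _ (mul_mem hW hM)⟩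
    | zero => exact ⟨0, by simp⟩
    | add x y _ _ hx hy =>
      obtain ⟨c, hc⟩ := hx
      obtain ⟨c', hc'⟩ := hy
      refine ⟨c + c', fun M hM => ?_⟩
      rw [add_mul, Matrix.trace_add]
      exact (norm_add_le _ _).trans (add_le_add (hc M hM) (hc' M hM))
    | smul a x _ hx =>
      obtain ⟨c, hc⟩ := hx
      refine ⟨‖a‖ * c, fun M hM => ?_⟩
      rw [smul_mul_assoc, Matrix.trace_smul, norm_smul]
      exact mul_le_mul_of_nonneg_left (hc M hM) (norm_nonneg _)
  choose c hc using h3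
  refine ⟨∑ i, ∑ j, c (Matrix.single j i 1) * ‖(Matrix.single i j 1 : Matrix n n ℂ)‖, fun M hM => ?_⟩
  conv_lhs => rw [Matrix.matrix_eq_sum_single M]
  refine (norm_sum_le _ _).trans (Finset.sum_le_sum fun i _ => ?_)
  refine (norm_sum_le _ _).trans (Finset.sum_le_sum fun j _ => ?_)
  have := hc (Matrix.single j i 1) M hM
  rw [Matrix.trace_single_mul] at this
  have h4 : Matrix.single i j (M i j) = (M i j) • (Matrix.single i j 1 : Matrix n n ℂ) := by
    rw [Matrix.smul_single]; simp
  rw [h4, norm_smul]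
  refine mul_le_mul_of_nonneg_right (by simpa using this) (norm_nonneg _)

theorem trace_bd {n : Type*} [Fintype n] [DecidableEq n] (M : Matrix n n ℂ)
    (h : ∀ z ∈ spectrum ℂ M, ‖z‖ ≤ 1) : ‖M.trace‖ ≤ Fintype.card n := by
  rw [Matrix.trace_eq_sum_roots_charpoly]
  have hr : ∀ z ∈ M.charpoly.roots, ‖z‖ ≤ 1 := fun z hz =>
    h z (Matrix.mem_spectrum_of_isRoot_charpoly (Polynomial.isRoot_of_mem_roots hz))
  have h2 : Multiset.card M.charpoly.roots ≤ Fintype.card n := by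
    rw [← M.charpoly_natDegree_eq_dim]; exact Polynomial.card_roots' _
  refine le_trans ?_ (Nat.cast_le.2 h2)
  generalize M.charpoly.roots = s at hr
  induction s using Multiset.induction with
  | empty => simp
  | cons a s ih =>
    simp only [Multiset.sum_cons, Multiset.card_cons, Nat.cast_add, Nat.cast_one]
    have := ih (fun z hz => hr z (Multiset.mem_cons_of_mem hz))
    have := hr a (Multiset.mem_cons_self a s)
    linarith [norm_add_le a s.sum]

theorem det_bd {n : Type*} [Fintype n] [DecidableEq n] (M : Matrix n n ℂ) {γ : ℝ} (hγ : γ < 1)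
    (h : ∀ z ∈ spectrum ℂ M, ‖z‖ ≤ γ) : (1 - γ) ^ (Fintype.card n) ≤ ‖(1 - M).det‖ := by
  have h0 : (1 - M).det = M.charpoly.eval 1 := by
    rw [Matrix.eval_charpoly]; simp
  rw [h0, (IsAlgClosed.splits M.charpoly).eval_eq_prod_roots_of_monic M.charpoly_monic]
  have hr : ∀ z ∈ M.charpoly.roots, ‖z‖ ≤ γ := fun z hz =>
    h z (Matrix.mem_spectrum_of_isRoot_charpoly (Polynomial.isRoot_of_mem_roots hz))
  have h2 : Fintype.card n = Multiset.card M.charpoly.roots := by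
    rw [← M.charpoly_natDegree_eq_dim]; exact (IsAlgClosed.splits M.charpoly).natDegree_eq_card_roots
  rw [h2]
  generalize M.charpoly.roots = s at hr
  induction s using Multiset.induction with
  | empty => simp
  | cons a s ih =>
    simp only [Multiset.map_cons, Multiset.prod_cons, Multiset.card_cons, norm_mul, pow_succ']
    have := ih (fun z hz => hr z (Multiset.mem_cons_of_mem hz))
    have h5 := hr a (Multiset.mem_cons_self a s)
    have h6 : 1 - γ ≤ ‖1 - a‖ := by
      have := norm_sub_norm_le (1:ℂ) a
      simp at this; linarith
    exact mul_le_mul h6 this (by have : 0 < 1 - γ := by linarith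
                                 positivity) (norm_nonneg _)

noncomputable def gprod {M I : Type*} [Monoid M] (S : I → M) (x : ℕ → I) : ℕ → M
  | 0 => 1
  | n + 1 => S (x n) * gprod S x n

theorem gprod_add {M I : Type*} [Monoid M] (S : I → M) (x : ℕ → I) (m n : ℕ) :
    gprod S x (m + n) = gprod S (fun k => x (k + m)) n * gprod S x m := by
  induction n with
  | zero => simp [gprod]
  | succ n ih => rw [← add_assoc, gprod, ih, gprod, mul_assoc, add_comm m n]

theorem gprod_congr {M I : Type*} [Monoid M] (S : I → M) (x y : ℕ → I) (n : ℕ)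
    (h : ∀ k < n, x k = y k) : gprod S x n = gprod S y n := by
  induction n with
  | zero => rfl
  | succ n ih => rw [gprod, gprod, ih (fun k hk => h k (by omega)), h n (by omega)]

theorem gprod_map {M M' I : Type*} [Monoid M] [Monoid M'] (f : M →* M') (S : I → M) (x : ℕ → I)
    (n : ℕ) : gprod (fun i => f (S i)) x n = f (gprod S x n) := by
  induction n with
  | zero => simp [gprod]
  | succ n ih => simp [gprod, ih]

theorem gprod_of_mem {M I : Type*} [Monoid M] (S : I → M) (i₀ : I) (a : M)
    (ha : a ∈ Submonoid.closure (Set.range S)) : ∃ x n, a = gprod S x n := by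
  induction ha using Submonoid.closure_induction_left with
  | one => exact ⟨fun _ => i₀, 0, rfl⟩
  | mul_left s hs y hy ih =>
    obtain ⟨i, rfl⟩ := hs
    obtain ⟨x, n, rfl⟩ := ih
    refine ⟨Function.update x n i, n + 1, ?_⟩
    rw [gprod, Function.update_self]
    congr 1
    apply gprod_congr
    intro k hk
    rw [Function.update_of_ne (by omega)]

theorem gprod_mem {M I : Type*} [Monoid M] (S : I → M) (x : ℕ → I) (n : ℕ) :
    gprod S x n ∈ Submonoid.closure (Set.range S) := by
  induction n with
  | zero => exact one_mem _
  | succ n ih => exact mul_mem (Submonoid.subset_closure ⟨_, rfl⟩) ih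

theorem gprod_continuous {M I : Type*} [Monoid M] [TopologicalSpace M] [ContinuousMul M]
    [TopologicalSpace I] (S : I → M) (hS : Continuous S) (n : ℕ) :
    Continuous (fun x : ℕ → I => gprod S x n) := by
  induction n with
  | zero => exact continuous_const
  | succ n ih => exact (hS.comp (continuous_apply n)).mul ih

theorem shift_mem {I : Type*} {Λ : Set (ℕ → I)} (hinv : ShiftInv Λ) (x : ℕ → I) (hx : x ∈ Λ)
    (m : ℕ) : (fun k => x (k + m)) ∈ Λ := by
  induction m with
  | zero => exact hx
  | succ m ih =>
    have := hinv _ ih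
    convert this using 2
    ring_nf

theorem tendsto_of_bounded {n I : Type*} [Fintype n] [DecidableEq n] (S : I → Matrix n n ℂ)
    (x : ℕ → I) (K : ℝ) (hK : ∀ i m, ‖gprod S (fun k => x (k + i)) m‖ ≤ K)
    {γ : ℝ} (hγ : γ < 1) (N : ℕ)
    (hs : ∀ i m, N ≤ m → ∀ z ∈ spectrum ℂ (gprod S (fun k => x (k + i)) m), ‖z‖ ≤ γ) :
    Tendsto (fun m => gprod S x m) atTop (𝓝 0) := by
  by_contra hcon
  let P : ℕ → ℕ → Matrix n n ℂ := fun i j => gprod S (fun k => x (k + i)) (j - i)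
  have hP0 : ∀ m, P 0 m = gprod S x m := fun m => rfl
  have hPm : ∀ i j k, i ≤ j → j ≤ k → P i k = P j k * P i j := by
    intro i j k hij hjk
    have := gprod_add S (fun k => x (k + i)) (j - i) (k - j)
    rw [show j - i + (k - j) = k - i by omega] at this
    simp only [P]
    rw [this]
    congr 2
    ext a
    congr 1
    omega
  obtain ⟨ε, hε, φ, hφ, hφε⟩ : ∃ ε > 0, ∃ φ : ℕ → ℕ, StrictMono φ ∧ ∀ m, ε ≤ ‖P 0 (φ m)‖ := by
    rw [Metric.tendsto_atTop] at hcon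
    push Not at hcon
    obtain ⟨ε, hε, h⟩ := hcon
    obtain ⟨φ, hφ, h2⟩ := Filter.extraction_of_frequently_atTop
      (P := fun m => ε ≤ ‖P 0 m‖) (Filter.frequently_atTop.2 (fun a => by
        obtain ⟨b, hb, hb2⟩ := h a
        exact ⟨b, hb, by rw [dist_zero_right] at hb2; exact hb2⟩))
    exact ⟨ε, hε, φ, hφ, h2⟩
  obtain ⟨E', -, ψ, hψ, hE'⟩ := (isCompact_univ_pi
    (fun _ : ℕ => isCompact_closedBall (0 : Matrix n n ℂ) K)).tendsto_subseq
    (x := fun m i => P i (φ m)) (by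
      intro m i _
      simpa using hK i _)
  rw [tendsto_pi_nhds] at hE'
  have ht : Tendsto (φ ∘ ψ) atTop atTop := (hφ.comp hψ).tendsto_atTop
  have hE'b : ∀ i, E' i ∈ Metric.closedBall (0 : Matrix n n ℂ) K := by
    intro i
    refine Metric.isClosed_closedBall.mem_of_tendsto (hE' i) (Eventually.of_forall fun m => ?_)
    simpa using hK i _
  obtain ⟨E, -, χ, hχ, hE⟩ := (isCompact_closedBall (0 : Matrix n n ℂ) K).tendsto_subseq
    (x := fun m => E' (φ (ψ m))) (fun m => hE'b _)
  have ht2 : Tendsto (fun m => φ (ψ (χ m))) atTop atTop := ht.comp hχ.tendsto_atTop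
  have hm1 : ∀ i j, i ≤ j → E' i = E' j * P i j := by
    intro i j hij
    refine tendsto_nhds_unique (hE' i) (((hE' j).mul_const (P i j)).congr' ?_)
    filter_upwards [ht.eventually_ge_atTop j] with m hm
    exact (hPm i j _ hij hm).symm
  have hm2 : ∀ i, E' i = E * E' i := by
    intro i
    have h1 : Tendsto (fun m => E' (φ (ψ (χ m))) * P i (φ (ψ (χ m)))) atTop (𝓝 (E * E' i)) :=
      hE.mul ((hE' i).comp hχ.tendsto_atTop)
    refine tendsto_nhds_unique (tendsto_const_nhds.congr' ?_) h1
    filter_upwards [ht2.eventually_ge_atTop i] with m hm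
    exact hm1 i _ hm
  have hEE : E = E * E := by
    refine tendsto_nhds_unique hE ((hE.const_mul E).congr fun m => ?_)
    exact (hm2 _).symm
  have hE0 : E ≠ 0 := by
    rintro rfl
    have h0 : E' 0 = 0 := by rw [hm2 0]; simp
    have : ε ≤ ‖E' 0‖ := ge_of_tendsto (hE' 0).norm (Eventually.of_forall fun m => hφε _)
    rw [h0, norm_zero] at this
    linarith
  have hdet : (1 - E).det = 0 := by
    by_contra hd
    have hu : IsUnit (1 - E) := (Matrix.isUnit_iff_isUnit_det _).2 (isUnit_iff_ne_zero.2 hd)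
    apply hE0
    have : (1 - E) * E = (1 - E) * 0 := by rw [sub_mul, ← hEE]; simp
    exact hu.mul_left_cancel this
  have hc : Continuous (fun M : Matrix n n ℂ => ‖(1 - M).det‖) :=
    (Continuous.matrix_det (continuous_const.sub continuous_id)).norm
  have hd1 : ∀ i, (1 - γ) ^ (Fintype.card n) ≤ ‖(1 - E' i).det‖ := by
    intro i
    refine ge_of_tendsto ((hc.tendsto _).comp (hE' i)) ?_
    filter_upwards [ht.eventually_ge_atTop (i + N)] with m hm
    exact det_bd _ hγ (hs i _ (by simp only [Function.comp] at hm; omega))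
  have hd2 : (1 - γ) ^ (Fintype.card n) ≤ ‖(1 - E).det‖ :=
    ge_of_tendsto ((hc.tendsto _).comp hE) (Eventually.of_forall fun m => hd1 _)
  rw [hdet, norm_zero] at hd2
  have : 0 < (1 - γ) ^ (Fintype.card n) := pow_pos (by linarith) _
  linarith

theorem bdd_of_compact {n m I : Type*} [Fintype n] [DecidableEq n] [Fintype m] [DecidableEq m]
    [MetricSpace I]
    (S : I → Matrix n m ℂ) (hS : Continuous S)
    (Λ : Set (ℕ → I)) (hcomp : IsCompact Λ) (hinv : ShiftInv Λ) :
    ∃ C : ℝ, 1 ≤ C ∧ ∀ x ∈ Λ, ∀ k, ‖S (x k)‖ ≤ C := by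
  obtain ⟨C, hC⟩ := hcomp.exists_bound_of_continuousOn (f := fun x => S (x 0))
    (hS.comp (continuous_apply 0)).continuousOn
  refine ⟨max 1 C, le_max_left _ _, fun x hx k => ?_⟩
  have := hC _ (shift_mem hinv x hx k)
  simp only [zero_add] at this
  exact this.trans (le_max_right _ _)

theorem exp_of_tendsto {n I : Type*} [Fintype n] [DecidableEq n] [MetricSpace I]
    (S : I → Matrix n n ℂ) (hS : Continuous S)
    (Λ : Set (ℕ → I)) (hcomp : IsCompact Λ) (hinv : ShiftInv Λ)
    (ht : ∀ x ∈ Λ, Tendsto (fun m => gprod S x m) atTop (𝓝 0)) :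
    ∃ K r : ℝ, 0 < K ∧ 0 < r ∧ r < 1 ∧ ∀ x ∈ Λ, ∀ m, ‖gprod S x m‖ ≤ K * r ^ m := by
  obtain ⟨N, hN⟩ : ∃ N : ℕ, ∀ x ∈ Λ, ∃ m, 1 ≤ m ∧ m ≤ N ∧ ‖gprod S x m‖ < 1 / 2 := by
    refine hcomp.induction_on (p := fun s => ∃ N : ℕ, ∀ x ∈ s, ∃ m, 1 ≤ m ∧ m ≤ N ∧ ‖gprod S x m‖ < 1 / 2)
      ⟨0, by simp⟩ ?_ ?_ ?_
    · rintro s t hst ⟨N, h⟩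
      exact ⟨N, fun x hx => h x (hst hx)⟩
    · rintro s t ⟨N, h⟩ ⟨N', h'⟩
      refine ⟨max N N', ?_⟩
      rintro x (hx | hx)
      · obtain ⟨m, h1, h2, h3⟩ := h x hx
        exact ⟨m, h1, h2.trans (le_max_left _ _), h3⟩
      · obtain ⟨m, h1, h2, h3⟩ := h' x hx
        exact ⟨m, h1, h2.trans (le_max_right _ _), h3⟩
    · intro x hx
      have h1 := (ht x hx).norm
      rw [norm_zero] at h1
      obtain ⟨m, hm, hm1⟩ := ((h1.eventually_lt_const (show (0:ℝ) < 1/2 by norm_num)).and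
        (eventually_ge_atTop 1)).exists
      refine ⟨{y | ‖gprod S y m‖ < 1 / 2}, ?_, m, fun y hy => ⟨m, hm1, le_rfl, hy⟩⟩
      apply mem_nhdsWithin_of_mem_nhds
      exact (isOpen_lt (gprod_continuous S hS m).norm continuous_const).mem_nhds hm
  obtain ⟨C, hC1, hC⟩ := bdd_of_compact S hS Λ hcomp hinv
  set D : ℝ := max 1 ‖(1 : Matrix n n ℂ)‖ with hD
  have hD1 : 1 ≤ D := le_max_left _ _
  have hpow : ∀ x ∈ Λ, ∀ m, ‖gprod S x m‖ ≤ C ^ m * D := by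
    intro x hx m
    induction m with
    | zero => simp [gprod, hD]
    | succ m ih =>
      rw [gprod, pow_succ', mul_assoc]
      exact (norm_mul_le _ _).trans (mul_le_mul (hC x hx m) ih (norm_nonneg _) (by linarith))
  let r : ℝ := (1 / 2) ^ (1 / ((N + 1 : ℕ) : ℝ))
  have hr0 : 0 < r := by positivity
  have hr1 : r < 1 := Real.rpow_lt_one (by norm_num) (by norm_num) (by positivity)
  have hrN : r ^ (N + 1) = 1 / 2 := by
    rw [← Real.rpow_natCast, ← Real.rpow_mul (by norm_num)]
    rw [one_div_mul_cancel (by positivity)]; simp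
  have hCN : 1 ≤ C ^ (N + 1) := one_le_pow₀ hC1
  refine ⟨2 * C ^ (N + 1) * D, r, by positivity, hr0, hr1, ?_⟩
  intro x hx m
  induction m using Nat.strong_induction_on generalizing x with
  | _ m ih =>
    rcases Nat.lt_or_ge m (N + 1) with h | h
    · have h1 : C ^ m ≤ C ^ (N + 1) := pow_le_pow_right₀ hC1 h.le
      have h2 : 1 / 2 ≤ r ^ m := by
        rw [← hrN]; exact pow_le_pow_of_le_one hr0.le hr1.le h.le
      calc ‖gprod S x m‖ ≤ C ^ m * D := hpow x hx m
        _ ≤ C ^ (N + 1) * D := by gcongr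
        _ = 2 * C ^ (N + 1) * D * (1 / 2) := by ring
        _ ≤ _ := by gcongr
    · obtain ⟨k, hk1, hkN, hk⟩ := hN x hx
      have h3 := ih (m - k) (by omega) _ (shift_mem hinv x hx k)
      have h4 := gprod_add S x k (m - k)
      rw [show k + (m - k) = m by omega] at h4
      have h2 : 1 / 2 ≤ r ^ k := by
        rw [← hrN]; exact pow_le_pow_of_le_one hr0.le hr1.le (by omega)
      rw [h4]
      calc _ ≤ _ := norm_mul_le _ _
        _ ≤ (2 * C ^ (N + 1) * D * r ^ (m - k)) * r ^ k :=
          mul_le_mul h3 (hk.le.trans h2) (norm_nonneg _) (by positivity)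
        _ = 2 * C ^ (N + 1) * D * r ^ m := by
          rw [mul_assoc, ← pow_add, show m - k + k = m by omega]

theorem block_prod {p q I : Type*} [Fintype p] [DecidableEq p] [Fintype q] [DecidableEq q]
    (A : I → Matrix p p ℂ) (B : I → Matrix p q ℂ) (D : I → Matrix q q ℂ) (x : ℕ → I) (n : ℕ) :
    gprod (fun i => Matrix.fromBlocks (A i) (B i) 0 (D i)) x n =
      Matrix.fromBlocks (gprod A x n)
        (∑ k ∈ Finset.range n, gprod A (fun j => x (j + (k + 1))) (n - 1 - k) * B (x k) * gprod D x k)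
        0 (gprod D x n) := by
  induction n with
  | zero => simp [gprod]
  | succ n ih =>
    rw [gprod, ih, Matrix.fromBlocks_multiply]
    simp only [Matrix.mul_zero, Matrix.zero_mul, add_zero, zero_add]
    congr 1
    rw [Finset.sum_range_succ, Matrix.mul_sum]
    congr 1
    · apply Finset.sum_congr rfl
      intro k hk
      rw [Finset.mem_range] at hk
      rw [show n + 1 - 1 - k = (n - 1 - k) + 1 by omega, gprod, Matrix.mul_assoc, Matrix.mul_assoc,
        Matrix.mul_assoc, show n - 1 - k + (k + 1) = n by omega]
    · simp [gprod]

theorem block_tendsto {p q I : Type*} [Fintype p] [DecidableEq p] [Fintype q] [DecidableEq q]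
    [MetricSpace I]
    (A : I → Matrix p p ℂ) (B : I → Matrix p q ℂ) (D : I → Matrix q q ℂ)
    (hA : Continuous A) (hB : Continuous B) (hD : Continuous D)
    (Λ : Set (ℕ → I)) (hcomp : IsCompact Λ) (hinv : ShiftInv Λ)
    (htA : ∀ x ∈ Λ, Tendsto (fun m => gprod A x m) atTop (𝓝 0))
    (htD : ∀ x ∈ Λ, Tendsto (fun m => gprod D x m) atTop (𝓝 0)) :
    ∀ x ∈ Λ, Tendsto (fun m => gprod (fun i => Matrix.fromBlocks (A i) (B i) 0 (D i)) x m)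
      atTop (𝓝 0) := by
  intro x hx
  obtain ⟨K, r, hK, hr, hr1, hAb⟩ := exp_of_tendsto A hA Λ hcomp hinv htA
  obtain ⟨K', r', hK', hr', hr1', hDb⟩ := exp_of_tendsto D hD Λ hcomp hinv htD
  obtain ⟨C, hC1, hC⟩ := bdd_of_compact B hB Λ hcomp hinv
  set R := max r r'
  have hR : 0 < R := lt_max_of_lt_left hr
  have hR1 : R < 1 := max_lt hr1 hr1'
  simp_rw [block_prod]
  have h0 : (0 : Matrix (p ⊕ q) (p ⊕ q) ℂ) = Matrix.fromBlocks 0 0 0 0 := by simp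
  rw [h0]
  have hX : Tendsto (fun n => ∑ k ∈ Finset.range n, gprod A (fun j => x (j + (k + 1))) (n - 1 - k) * B (x k) * gprod D x k) atTop (𝓝 0) := by
    have hl : Tendsto (fun n : ℕ => (K * C * K' / R) * (n * R ^ n)) atTop (𝓝 0) := by
      simpa using (tendsto_self_mul_const_pow_of_lt_one hR.le hR1).const_mul (K * C * K' / R)
    refine squeeze_zero_norm (fun n => ?_) hl
    refine (norm_sum_le_of_le (n := fun _ => K * C * K' / R * R ^ n) _ fun k hk => ?_).trans ?_
    · rw [Finset.mem_range] at hk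
      have h1 := hAb _ (shift_mem hinv x hx (k + 1)) (n - 1 - k)
      have h2 := hC x hx k
      have h3 := hDb x hx k
      have h4 : r ^ (n - 1 - k) ≤ R ^ (n - 1 - k) := by gcongr; exact le_max_left _ _
      have h5 : r' ^ k ≤ R ^ k := by gcongr; exact le_max_right _ _
      have h6 : R ^ n = R ^ (n - 1 - k) * R ^ k * R := by
        rw [← pow_add, ← pow_succ]; congr 1; omega
      calc _ ≤ _ := Matrix.l2_opNorm_mul _ _
        _ ≤ (‖gprod A (fun j => x (j + (k + 1))) (n - 1 - k)‖ * ‖B (x k)‖) * ‖gprod D x k‖ := by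
          gcongr; exact Matrix.l2_opNorm_mul _ _
        _ ≤ ((K * R ^ (n - 1 - k)) * C) * (K' * R ^ k) := by
          gcongr
          · exact h1.trans (by gcongr)
          · exact h3.trans (by gcongr)
        _ = _ := by rw [h6]; field_simp
    · simp; apply le_of_eq; ring
  have hcont : Continuous (fun t : Matrix p p ℂ × Matrix p q ℂ × Matrix q q ℂ =>
      Matrix.fromBlocks t.1 t.2.1 0 t.2.2) :=
    Continuous.matrix_fromBlocks continuous_fst (continuous_fst.comp continuous_snd)
      continuous_const (continuous_snd.comp continuous_snd)
  exact (hcont.tendsto (0, 0, 0)).comp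
    ((htA x hx).prodMk_nhds (hX.prodMk_nhds (htD x hx)))

theorem key_tendsto {I : Type*} [MetricSpace I] 
    (Λ : Set (ℕ → I)) (hcomp : IsCompact Λ) (hinv : ShiftInv Λ) {γ : ℝ} (hγ : γ < 1) (N : ℕ)
    (c : ℕ) : ∀ (n : Type) [Fintype n] [DecidableEq n] (_ : Fintype.card n = c)
    (S : I → Matrix n n ℂ) (_ : Continuous S)
    (_ : ∀ x m, ∀ z ∈ spectrum ℂ (gprod S x m), ‖z‖ ≤ 1)
    (_ : ∀ x ∈ Λ, ∀ m, N ≤ m → ∀ z ∈ spectrum ℂ (gprod S x m), ‖z‖ ≤ γ),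
    ∀ x ∈ Λ, Tendsto (fun m => gprod S x m) atTop (𝓝 0) := by
  induction c using Nat.strong_induction_on with
  | _ c ih =>
  intro n _ _ hcard S hS h1 hΛ x hx
  rcases isEmpty_or_nonempty n with hn | hn
  · have : (fun m => gprod S x m) = fun _ => 0 := by
      funext m; exact Subsingleton.elim _ _
    rw [this]; exact tendsto_const_nhds
  by_cases hirr : ∀ p : Submodule ℂ (n → ℂ),
      (∀ a ∈ Set.range S, ∀ v ∈ p, Matrix.mulVec a v ∈ p) → p = ⊥ ∨ p = ⊤
  · obtain ⟨K, hK⟩ := bounded_of_irr (Set.range S) hirr (by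
      intro M hM
      obtain ⟨y, m, rfl⟩ := gprod_of_mem S (x 0) M hM
      exact trace_bd _ (h1 y m))
    exact tendsto_of_bounded S x K (fun i m => hK _ (gprod_mem S _ m)) hγ N
      (fun i m hm => hΛ _ (shift_mem hinv x hx i) m hm)
  · push Not at hirr
    obtain ⟨p, hp, hpb, hpt⟩ := hirr
    obtain ⟨q, hpq⟩ := Submodule.exists_isCompl p
    have hqt : q ≠ ⊤ := by
      rintro rfl
      exact hpb (by simpa using hpq.inf_eq_bot)
    let bp := Module.finBasis ℂ p
    let bq := Module.finBasis ℂ q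
    let b := (bp.prod bq).map (p.prodEquivOfIsCompl q hpq)
    let e : Matrix n n ℂ ≃ₐ[ℂ] Matrix (Fin (Module.finrank ℂ p) ⊕ Fin (Module.finrank ℂ q))
        (Fin (Module.finrank ℂ p) ⊕ Fin (Module.finrank ℂ q)) ℂ :=
      (Matrix.toLinAlgEquiv' (R := ℂ) (n := n)).trans (LinearMap.toMatrixAlgEquiv b)
    have he : Continuous e := LinearMap.continuous_of_finiteDimensional e.toLinearMap
    have hes : Continuous e.symm := LinearMap.continuous_of_finiteDimensional e.symm.toLinearMap
    have hg : ∀ y m, gprod (fun i => e (S i)) y m = e (gprod S y m) := fun y m =>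
      gprod_map e.toAlgHom.toRingHom.toMonoidHom S y m
    let A := fun i => (e (S i)).toBlocks₁₁
    let B := fun i => (e (S i)).toBlocks₁₂
    let D := fun i => (e (S i)).toBlocks₂₂
    have hS' : Continuous (fun i => e (S i)) := he.comp hS
    have hA : Continuous A := by
      refine continuous_pi fun a => continuous_pi fun a' => ?_
      exact hS'.matrix_elem _ _
    have hB : Continuous B := by
      refine continuous_pi fun a => continuous_pi fun a' => ?_
      exact hS'.matrix_elem _ _
    have hD : Continuous D := by
      refine continuous_pi fun a => continuous_pi fun a' => ?_
      exact hS'.matrix_elem _ _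
    have hblock : ∀ i, e (S i) = Matrix.fromBlocks (A i) (B i) 0 (D i) := by
      intro i
      rw [← Matrix.fromBlocks_toBlocks (e (S i))]
      congr 1
      ext k j
      have hmem : Matrix.mulVec (S i) (bp j : n → ℂ) ∈ p := hp _ ⟨i, rfl⟩ _ (bp j).2
      have hz : (q.projectionOnto p hpq.symm) ((S i).mulVec (bp j : n → ℂ)) = 0 :=
        (Submodule.projectionOnto_apply_eq_zero_iff hpq.symm).2 hmem
      simp [e, b, Matrix.toBlocks₂₁, LinearMap.toMatrixAlgEquiv_apply, hz]
    have hgb : ∀ y m, ∃ X, e (gprod S y m) = Matrix.fromBlocks (gprod A y m) X 0 (gprod D y m) := by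
      intro y m
      rw [← hg]
      simp_rw [hblock]
      exact ⟨_, block_prod A B D y m⟩
    have hspecA : ∀ y m, spectrum ℂ (gprod A y m) ⊆ spectrum ℂ (gprod S y m) := by
      intro y m z hz
      obtain ⟨X, hX⟩ := hgb y m
      rw [← AlgEquiv.spectrum_eq e, hX, Matrix.mem_spectrum_iff_isRoot_charpoly,
        Matrix.charpoly_fromBlocks_zero₂₁]
      rw [Matrix.mem_spectrum_iff_isRoot_charpoly] at hz
      exact Polynomial.root_mul_right_of_isRoot _ hz
    have hspecD : ∀ y m, spectrum ℂ (gprod D y m) ⊆ spectrum ℂ (gprod S y m) := by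
      intro y m z hz
      obtain ⟨X, hX⟩ := hgb y m
      rw [← AlgEquiv.spectrum_eq e, hX, Matrix.mem_spectrum_iff_isRoot_charpoly,
        Matrix.charpoly_fromBlocks_zero₂₁]
      rw [Matrix.mem_spectrum_iff_isRoot_charpoly] at hz
      exact Polynomial.root_mul_left_of_isRoot _ hz
    have hfp : Module.finrank ℂ p < c := by
      rw [← hcard, ← Module.finrank_fintype_fun_eq_card (R := ℂ)]
      exact Submodule.finrank_lt hpt
    have hfq : Module.finrank ℂ q < c := by
      rw [← hcard, ← Module.finrank_fintype_fun_eq_card (R := ℂ)]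
      exact Submodule.finrank_lt hqt
    have htA := ih _ hfp (Fin (Module.finrank ℂ p)) (by simp) A hA
      (fun y m z hz => h1 y m z (hspecA y m hz))
      (fun y hy m hm z hz => hΛ y hy m hm z (hspecA y m hz))
    have htD := ih _ hfq (Fin (Module.finrank ℂ q)) (by simp) D hD
      (fun y m z hz => h1 y m z (hspecD y m hz))
      (fun y hy m hm z hz => hΛ y hy m hm z (hspecD y m hz))
    have ht := block_tendsto A B D hA hB hD Λ hcomp hinv htA htD x hx
    simp_rw [← hblock, hg] at ht
    have ht2 := (hes.tendsto 0).comp ht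
    simpa [Function.comp_def] using ht2

theorem prodS_eq {d : ℕ} {I : Type*} (S : I → Matrix (Fin d) (Fin d) ℂ) (x : ℕ → I) (n : ℕ) :
    prodS S x n = gprod S x n := by
  induction n with
  | zero => rfl
  | succ n ih => rw [prodS, gprod, ih]

theorem specRad_le_norm {d : ℕ} (hd : 1 ≤ d) (A : Matrix (Fin d) (Fin d) ℂ) : specRad A ≤ ‖A‖ := by
  have : Nonempty (Fin d) := ⟨⟨0, hd⟩⟩
  have h := spectrum.spectralRadius_le_nnnorm (𝕜 := ℂ) A
  have := ENNReal.toReal_mono ENNReal.coe_ne_top h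
  simpa [specRad] using this

theorem le_specRad {d : ℕ} (hd : 1 ≤ d) (A : Matrix (Fin d) (Fin d) ℂ) (z : ℂ)
    (hz : z ∈ spectrum ℂ A) : ‖z‖ ≤ specRad A := by
  have : Nonempty (Fin d) := ⟨⟨0, hd⟩⟩
  have h := spectrum.spectralRadius_le_nnnorm (𝕜 := ℂ) A
  have h2 : (‖z‖₊ : ENNReal) ≤ spectralRadius ℂ A := le_iSup₂ (f := fun k (_ : k ∈ spectrum ℂ A) => (‖k‖₊ : ENNReal)) z hz
  have := ENNReal.toReal_mono (ne_top_of_le_ne_top ENNReal.coe_ne_top h) h2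
  simpa [specRad] using this

theorem gprod_periodic {M I : Type*} [Monoid M] (S : I → M) (x : ℕ → I) (m : ℕ) (k : ℕ) :
    gprod S (fun j => x (j % m)) (m * k) = gprod S x m ^ k := by
  induction k with
  | zero => simp [gprod]
  | succ k ih =>
    rw [mul_add, mul_one, gprod_add, ih, pow_succ']
    congr 1
    apply gprod_congr
    intro j hj
    simp [Nat.mod_eq_of_lt hj]

theorem specRad_pow_le {d : ℕ} (hd : 1 ≤ d) {I : Type*}
    (S : I → Matrix (Fin d) (Fin d) ℂ) {C : ℝ} (hC1 : 1 ≤ C) (hC : ∀ i, ‖S i‖ ≤ C)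
    (x : ℕ → I) (n : ℕ) : specRad (prodS S x n) ^ (1 / (n : ℝ)) ≤ C := by
  have : Nonempty (Fin d) := ⟨⟨0, hd⟩⟩
  rcases Nat.eq_zero_or_pos n with rfl | hn
  · simpa using hC1
  have h1 : ‖prodS S x n‖ ≤ C ^ n := by
    clear hn
    induction n with
    | zero => simp [prodS]
    | succ n ih =>
      rw [prodS, pow_succ']
      exact (norm_mul_le _ _).trans (mul_le_mul (hC _) ih (norm_nonneg _) (by linarith))
  have h2 := (specRad_le_norm hd _).trans h1
  have h3 : (0:ℝ) ≤ specRad (prodS S x n) := ENNReal.toReal_nonneg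
  calc _ ≤ (C ^ n) ^ (1 / (n : ℝ)) := Real.rpow_le_rpow h3 h2 (by positivity)
    _ = C := by rw [one_div]; exact Real.pow_rpow_inv_natCast (by linarith) (by omega)

theorem spec_le_one {d : ℕ} (hd : 1 ≤ d) {I : Type*} 
    (S : I → Matrix (Fin d) (Fin d) ℂ) {C : ℝ} (hC1 : 1 ≤ C) (hC : ∀ i, ‖S i‖ ≤ C)
    (hgsr : gsr S (Set.univ : Set (ℕ → I)) = 1) (x : ℕ → I) (m : ℕ) (z : ℂ)
    (hz : z ∈ spectrum ℂ (gprod S x m)) : ‖z‖ ≤ 1 := by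
  have : Nonempty (Fin d) := ⟨⟨0, hd⟩⟩
  rcases Nat.eq_zero_or_pos m with rfl | hm
  · rw [gprod, spectrum.one_eq] at hz
    rw [hz]; simp
  by_contra hcon
  push Not at hcon
  have hc : 1 < ‖z‖ ^ (1 / (m : ℝ)) := Real.one_lt_rpow hcon (by positivity)
  have : Nonempty (Set.univ : Set (ℕ → I)) := ⟨⟨x, trivial⟩⟩
  have hle : ‖z‖ ^ (1 / (m : ℝ)) ≤ gsr S (Set.univ : Set (ℕ → I)) := by
    refine le_limsup_of_frequently_le ?_ ?_
    · rw [frequently_atTop]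
      intro a
      refine ⟨m * (a + 1), by nlinarith, ?_⟩
      have h1 : ‖z‖ ^ (a + 1) ≤ specRad (prodS S (fun j => x (j % m)) (m * (a + 1))) := by
        rw [← norm_pow]
        apply le_specRad hd
        rw [prodS_eq, gprod_periodic]
        exact spectrum.pow_mem_pow _ _ hz
      refine le_trans ?_ (le_ciSup (f := fun y : (Set.univ : Set (ℕ → I)) =>
        specRad (prodS S y.1 (m * (a + 1))) ^ (1 / ((m * (a + 1) : ℕ) : ℝ)))
        ⟨C, ?_⟩ ⟨fun j => x (j % m), trivial⟩)
      · refine le_trans (le_of_eq ?_) (Real.rpow_le_rpow (by positivity) h1 (by positivity))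
        rw [← Real.rpow_natCast, ← Real.rpow_mul (norm_nonneg _)]
        congr 1
        push_cast
        field_simp
      · rintro _ ⟨y, rfl⟩
        exact specRad_pow_le hd S hC1 hC y.1 _
    · exact isBoundedUnder_of ⟨C, fun n => ciSup_le fun y => specRad_pow_le hd S hC1 hC y.1 n⟩
  rw [hgsr] at hle
  linarith

theorem a_to_b {d : ℕ} (hd : 1 ≤ d) {I : Type*} [MetricSpace I]
    (S : I → Matrix (Fin d) (Fin d) ℂ) (hS : Continuous S)
    (Λ : Set (ℕ → I)) (hne : Λ.Nonempty) (hcomp : IsCompact Λ) (hinv : ShiftInv Λ)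
    (ha : ∀ x ∈ Λ, Tendsto (fun n : ℕ => gprod S x n) atTop (𝓝 0)) : gsr S Λ < 1 := by
  obtain ⟨K, r, hK, hr, hr1, h⟩ := exp_of_tendsto S hS Λ hcomp hinv ha
  have : Nonempty Λ := hne.to_subtype
  set R := (r + 1) / 2 with hRdef
  have hrR : r < R := by linarith
  have hR0 : 0 < R := by linarith
  have hR1 : R < 1 := by linarith
  have hev : ∀ᶠ n : ℕ in atTop, K * r ^ n ≤ R ^ n := by
    have h1 : Tendsto (fun n : ℕ => K * (r / R) ^ n) atTop (𝓝 0) := by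
      simpa using (tendsto_pow_atTop_nhds_zero_of_lt_one (by positivity)
        ((div_lt_one hR0).2 hrR)).const_mul K
    filter_upwards [h1.eventually_lt_const one_pos] with n hn
    rw [div_pow, ← mul_div_assoc, div_lt_one (by positivity)] at hn
    exact hn.le
  refine lt_of_le_of_lt ?_ hR1
  refine limsup_le_of_le ?_ ?_
  · refine isCoboundedUnder_le_of_le atTop (x := 0) fun n => ?_
    exact Real.iSup_nonneg fun y => Real.rpow_nonneg ENNReal.toReal_nonneg _
  · filter_upwards [hev, eventually_ge_atTop 1] with n hn hn1
    refine ciSup_le fun y => ?_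
    have h2 : specRad (prodS S y.1 n) ≤ R ^ n := by
      refine (specRad_le_norm hd _).trans ?_
      rw [prodS_eq]
      exact (h y.1 y.2 n).trans hn
    calc _ ≤ (R ^ n) ^ (1 / (n : ℝ)) := Real.rpow_le_rpow ENNReal.toReal_nonneg h2 (by positivity)
      _ = R := by rw [one_div]; exact Real.pow_rpow_inv_natCast hR0.le (by omega)

theorem b_to_c {d : ℕ} (hd : 1 ≤ d) {I : Type*}
    (S : I → Matrix (Fin d) (Fin d) ℂ) {C : ℝ} (hC1 : 1 ≤ C) (hC : ∀ i, ‖S i‖ ≤ C)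
    (Λ : Set (ℕ → I)) (hne : Λ.Nonempty) (hb : gsr S Λ < 1) :
    ∃ γ : ℝ, 0 < γ ∧ γ < 1 ∧ ∃ N : ℕ, 1 ≤ N ∧
          ∀ n : ℕ, N ≤ n → ∀ x ∈ Λ, specRad (prodS S x n) ≤ γ := by
  have : Nonempty Λ := hne.to_subtype
  obtain ⟨γ, hγ, hγ1⟩ := exists_between (max_lt hb (zero_lt_one (α := ℝ)))
  have hγ0 : 0 < γ := (le_max_right _ _).trans_lt hγ
  have hb' : gsr S Λ < γ := (le_max_left _ _).trans_lt hγ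
  have hev := eventually_lt_of_limsup_lt hb'
    (isBoundedUnder_of ⟨C, fun n => ciSup_le fun y => specRad_pow_le hd S hC1 hC y.1 n⟩)
  obtain ⟨N, hN⟩ := eventually_atTop.1 hev
  refine ⟨γ, hγ0, hγ1, N + 1, by omega, fun n hn x hx => ?_⟩
  have h1 := hN n (by omega)
  have h2 : specRad (prodS S x n) ^ (1 / (n : ℝ)) ≤ γ := by
    refine le_trans (le_ciSup (f := fun y : Λ => specRad (prodS S y.1 n) ^ (1 / (n : ℝ)))
      ⟨C, ?_⟩ ⟨x, hx⟩) h1.le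
    rintro _ ⟨y, rfl⟩
    exact specRad_pow_le hd S hC1 hC y.1 _
  have h3 : (0:ℝ) ≤ specRad (prodS S x n) := ENNReal.toReal_nonneg
  calc specRad (prodS S x n) = (specRad (prodS S x n) ^ (1 / (n : ℝ))) ^ n := by
        rw [one_div, Real.rpow_inv_natCast_pow h3 (by omega)]
    _ ≤ γ ^ n := pow_le_pow_left₀ (Real.rpow_nonneg h3 _) h2 n
    _ ≤ γ := pow_le_of_le_one hγ0.le hγ1.le (by omega)

theorem final_aux {d : ℕ} (hd : 1 ≤ d) {I : Type*} [MetricSpace I]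
    (S : I → Matrix (Fin d) (Fin d) ℂ) (hS : Continuous S)
    (hbdd : ∃ C : ℝ, ∀ i : I, opNorm (S i) ≤ C)
    (hgsr : gsr S (Set.univ : Set (ℕ → I)) = 1)
    (Λ : Set (ℕ → I)) (hne : Λ.Nonempty) (hcomp : IsCompact Λ) (hinv : ShiftInv Λ) :
    ((∀ x ∈ Λ, Filter.Tendsto (fun n : ℕ => prodS S x n) Filter.atTop (nhds 0)) ↔
        gsr S Λ < 1) ∧
      (gsr S Λ < 1 ↔
        ∃ γ : ℝ, 0 < γ ∧ γ < 1 ∧ ∃ N : ℕ, 1 ≤ N ∧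
          ∀ n : ℕ, N ≤ n → ∀ x ∈ Λ, specRad (prodS S x n) ≤ γ) := by
  obtain ⟨C₀, hC₀⟩ := hbdd
  obtain ⟨C, hC1, hC⟩ : ∃ C : ℝ, 1 ≤ C ∧ ∀ i, ‖S i‖ ≤ C :=
    ⟨max 1 C₀, le_max_left _ _, fun i => (hC₀ i).trans (le_max_right _ _)⟩
  have hab : (∀ x ∈ Λ, Filter.Tendsto (fun n : ℕ => prodS S x n) Filter.atTop (nhds 0)) →
      gsr S Λ < 1 := by
    intro ha
    simp_rw [prodS_eq] at ha
    exact a_to_b hd S hS Λ hne hcomp hinv ha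
  have hbc := b_to_c hd S hC1 hC Λ hne
  have hca : (∃ γ : ℝ, 0 < γ ∧ γ < 1 ∧ ∃ N : ℕ, 1 ≤ N ∧
          ∀ n : ℕ, N ≤ n → ∀ x ∈ Λ, specRad (prodS S x n) ≤ γ) →
      (∀ x ∈ Λ, Filter.Tendsto (fun n : ℕ => prodS S x n) Filter.atTop (nhds 0)) := by
    rintro ⟨γ, hγ0, hγ1, N, hN, h⟩
    simp_rw [prodS_eq]
    refine key_tendsto Λ hcomp hinv hγ1 N d (Fin d) (by simp) S hS
      (fun x m z hz => spec_le_one hd S hC1 hC hgsr x m z hz) ?_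
    intro x hx m hm z hz
    rw [← prodS_eq] at hz
    exact (le_specRad hd _ z hz).trans (h m hm x hx)
  exact ⟨⟨hab, fun h => hca (hbc h)⟩, ⟨hbc, fun h => hab (hca h)⟩⟩

end StabAux

/-- **Theorem B.** Criteria for absolute asymptotic stability under switching constraints. -/
theorem theoremB {d : ℕ} (hd : 1 ≤ d) {I : Type*} [MetricSpace I]
    (S : I → Matrix (Fin d) (Fin d) ℂ) (hS : Continuous S)
    (hbdd : ∃ C : ℝ, ∀ i : I, opNorm (S i) ≤ C)
    (hgsr : gsr S (Set.univ : Set (ℕ → I)) = 1)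
    (Λ : Set (ℕ → I)) (hne : Λ.Nonempty) (hcomp : IsCompact Λ) (hinv : ShiftInv Λ) :
    ((∀ x ∈ Λ, Filter.Tendsto (fun n : ℕ => prodS S x n) Filter.atTop (nhds 0)) ↔
        gsr S Λ < 1) ∧
      (gsr S Λ < 1 ↔
        ∃ γ : ℝ, 0 < γ ∧ γ < 1 ∧ ∃ N : ℕ, 1 ≤ N ∧
          ∀ n : ℕ, N ≤ n → ∀ x ∈ Λ, specRad (prodS S x n) ≤ γ) := by
  exact final_aux hd S hS hbdd hgsr Λ hne hcomp hinv
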